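/- For all integers k, q ≥ 1, the quantum transition capacity satisfies ⟦SIZE[k(q−1)] ∖ CHN^q → CHN^{q+1}⟧_k ≤ e·k·√(10·k·q·T/M), where e is Euler's number. -/

import Mathlib

noncomputable section

/- `Ȳ = Y ∪ {⊥}` is modeled by `Option Y` (`⊥ = none`), databases by `X → Option Y`,
and `ℂ[DB]` by `EuclideanSpace ℂ (X → Option Y)`. -/

/-- matrix (in the computational basis) of the single-register unitary `Comp` -/
def compMat (Y : Type*) [Fintype Y] [DecidableEq Y] :
    Matrix (Option Y) (Option Y) ℂ :=
  Matrix.of fun u v =>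
    match u, v with
    | none, none => 0
    | some _, none => ((Real.sqrt (Fintype.card Y) : ℝ) : ℂ)⁻¹
    | none, some _ => ((Real.sqrt (Fintype.card Y) : ℝ) : ℂ)⁻¹
    | some a, some b => (if a = b then (1 : ℂ) else 0) - ((Fintype.card Y : ℕ) : ℂ)⁻¹

/-- matrix of the diagonal unitary `O_ŷ` associated to a character `ŷ` of `Y` -/
def oMat {Y : Type*} [Fintype Y] [DecidableEq Y] [AddCommGroup Y] (c : AddChar Y ℂ) :
    Matrix (Option Y) (Option Y) ℂ :=
  Matrix.diagonal fun u => Option.elim u 1 fun r => c r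

/-- matrix of the single-register compressed oracle `cO_ŷ = Comp ∘ O_ŷ ∘ Comp` -/
def cOMat {Y : Type*} [Fintype Y] [DecidableEq Y] [AddCommGroup Y] (c : AddChar Y ℂ) :
    Matrix (Option Y) (Option Y) ℂ :=
  compMat Y * oMat c * compMat Y

/-- a single-register operator (given by its matrix `m`) acting at register `x0` -/
def liftMat {X Y : Type*} [Fintype X] [DecidableEq X] [DecidableEq Y] (x0 : X)
    (m : Matrix (Option Y) (Option Y) ℂ) :
    Matrix (X → Option Y) (X → Option Y) ℂ :=
  Matrix.of fun D' D => if ∀ a, a ≠ x0 → D' a = D a then m (D' x0) (D x0) else 0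

/-- matrix of `cO_{x,ŷ}`: the composition of `cO_{ŷ i}` acting at register `x i` -/
def cOparMat {X Y : Type*} [Fintype X] [DecidableEq X] [Fintype Y] [DecidableEq Y]
    [AddCommGroup Y] {k : ℕ} (x : Fin k → X) (c : Fin k → AddChar Y ℂ) :
    Matrix (X → Option Y) (X → Option Y) ℂ :=
  (List.ofFn fun i : Fin k => liftMat (x i) (cOMat (c i))).prod

/-- matrix of the orthogonal projection onto `span{e_D : D ∈ P}` -/
def projMat {ι : Type*} [DecidableEq ι] (P : Set ι) : Matrix ι ι ℂ := by
  classical exact Matrix.of fun i j => if i = j ∧ i ∈ P then 1 else 0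

/-- the (continuous linear) operator on `ℓ²` given by a matrix -/
def toOp {ι : Type*} [Fintype ι] [DecidableEq ι] (m : Matrix ι ι ℂ) :
    EuclideanSpace ℂ ι →L[ℂ] EuclideanSpace ℂ ι :=
  LinearMap.toContinuousLinearMap (Matrix.toEuclideanLin m)

/-- `D|^x`: the set of databases that coincide with `D` outside of `x` -/
def agreeOff {X Y : Type*} {k : ℕ} (D : X → Option Y) (x : Fin k → X) :
    Set (X → Option Y) :=
  {D' | ∀ a : X, (∀ i, x i ≠ a) → D' a = D a}

/-- The quantum transition capacity `⟦P → P' | X₀⟧_k`: the supremum, over all `x ∈ X₀^k`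
with pairwise distinct entries, all `k`-tuples `ŷ` of characters of `Y` and all databases `D`,
of `‖P'|_{D|^x} ∘ cO_{x,ŷ} ∘ P|_{D|^x}‖` (`0` if the range is empty). -/
def qtc {X Y : Type*} [Fintype X] [DecidableEq X] [Fintype Y] [DecidableEq Y]
    [AddCommGroup Y] (P P' : Set (X → Option Y)) (k : ℕ) (X₀ : Set X) : ℝ :=
  sSup {v : ℝ | ∃ (x : Fin k → X) (c : Fin k → AddChar Y ℂ) (D : X → Option Y),
    Function.Injective x ∧ (∀ i, x i ∈ X₀) ∧
    v = ‖(toOp (projMat (P' ∩ agreeOff D x))).comp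
          ((toOp (cOparMat x c)).comp (toOp (projMat (P ∩ agreeOff D x))))‖}

end

/-- `CHN rel s`: the databases containing an `s`-chain w.r.t. the relation `rel` -/
def CHN {X Y : Type*} (rel : Y → X → Prop) (s : ℕ) : Set (X → Option Y) :=
  {D | ∃ xs : Fin (s + 1) → X, ∀ i : Fin s, ∃ y : Y,
    D (xs i.castSucc) = some y ∧ rel y (xs i.succ)}

/-- `SIZE s`: the databases with at most `s` non-`⊥` entries -/
def SIZE {X Y : Type*} (s : ℕ) : Set (X → Option Y) :=
  {D | {a | D a ≠ none}.Finite ∧ {a | D a ≠ none}.ncard ≤ s}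

/-! Turning a database without a `q`-chain into one with a `(q + 1)`-chain forces some queried
register to take a *new* value `y` with `y ◁ b`, where `b` is queried or lies in the support of the
database.  There are at most `(k + s) * T` such values when at most `s` registers are occupied.

Deleting from each single-register oracle the off-diagonal entries in the rows of these values
therefore kills the transition, while it moves each factor only by the Frobenius norm of the deleted
entries, at most `β = √(10 * (k + s) * T / M)`: a row has one entry of modulus at most `1 / √M` and
`M - 1` entries of modulus at most `3 / M`.  Telescoping over the `k` factors costs a factor
`(1 + β) ^ k ≤ e` as long as `k * β ≤ 1`; beyond that the bound exceeds `1` and holds because the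
oracle is a contraction.
-/

section NormedRing

variable {R : Type*} [SeminormedRing R] [NormOneClass R] {k : ℕ}

theorem norm_prod_ofFn_le_pow {a : Fin k → R} {r : ℝ} (ha : ∀ i, ‖a i‖ ≤ r) :
    ‖(List.ofFn a).prod‖ ≤ r ^ k := by
  calc ‖(List.ofFn a).prod‖ ≤ ((List.ofFn a).map norm).prod := List.norm_prod_le _
    _ = ∏ i, ‖a i‖ := by rw [List.map_ofFn, List.prod_ofFn]; rfl
    _ ≤ ∏ _i : Fin k, r := Finset.prod_le_prod (fun i _ => norm_nonneg _) fun i _ => ha i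
    _ = r ^ k := by simp

theorem norm_prod_ofFn_sub_prod_ofFn_le {a b : Fin k → R} {β : ℝ} (ha : ∀ i, ‖a i‖ ≤ 1)
    (hab : ∀ i, ‖a i - b i‖ ≤ β) :
    ‖(List.ofFn a).prod - (List.ofFn b).prod‖ ≤ k * β * (1 + β) ^ k := by
  induction k with
  | zero => simp
  | succ k ih =>
    have hβ : 0 ≤ β := (norm_nonneg _).trans (hab 0)
    have hb (i : Fin (k + 1)) : ‖b i‖ ≤ 1 + β := by
      calc ‖b i‖ = ‖a i - (a i - b i)‖ := by rw [sub_sub_cancel]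
        _ ≤ ‖a i‖ + ‖a i - b i‖ := norm_sub_le _ _
        _ ≤ 1 + β := add_le_add (ha i) (hab i)
    simp only [List.ofFn_succ, List.prod_cons]
    set A := (List.ofFn fun i : Fin k => a i.succ).prod
    set B := (List.ofFn fun i : Fin k => b i.succ).prod
    have hAB : ‖A - B‖ ≤ k * β * (1 + β) ^ k := ih (fun i => ha i.succ) fun i => hab i.succ
    have hB : ‖B‖ ≤ (1 + β) ^ k := norm_prod_ofFn_le_pow fun i => hb i.succ
    calc ‖a 0 * A - b 0 * B‖ = ‖a 0 * (A - B) + (a 0 - b 0) * B‖ := by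
          congr 1; noncomm_ring
      _ ≤ 1 * (k * β * (1 + β) ^ k) + β * (1 + β) ^ k :=
          norm_add_le_of_le (norm_mul_le_of_le (ha 0) hAB) (norm_mul_le_of_le (hab 0) hB)
      _ = (k + 1 : ℕ) * β * (1 + β) ^ k := by push_cast; ring
      _ ≤ (k + 1 : ℕ) * β * (1 + β) ^ (k + 1) := by
          gcongr
          · linarith
          · exact k.le_succ

end NormedRing

section Compression

open scoped Matrix.Norms.L2Operator

theorem l2_opNorm_sq_le_sum_norm_sq {𝕜 m n : Type*} [RCLike 𝕜] [Fintype m] [Fintype n]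
    [DecidableEq n] (A : Matrix m n 𝕜) : ‖A‖ ^ 2 ≤ ∑ i, ∑ j, ‖A i j‖ ^ 2 := by
  refine (Real.le_sqrt (norm_nonneg A) (by positivity)).1 ?_
  rw [Matrix.l2_opNorm_def]
  refine ContinuousLinearMap.opNorm_le_bound _ (Real.sqrt_nonneg _) fun v => ?_
  refine (sq_le_sq₀ (norm_nonneg _) (by positivity)).1 ?_
  rw [mul_pow, Real.sq_sqrt (by positivity), EuclideanSpace.norm_sq_eq, EuclideanSpace.norm_sq_eq,
    Finset.sum_mul]
  refine Finset.sum_le_sum fun i _ => ?_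
  calc ‖(A.mulVec v.ofLp) i‖ ^ 2 ≤ (∑ j, ‖A i j‖ * ‖v j‖) ^ 2 := by
        gcongr
        exact norm_sum_le_of_le _ fun j _ => norm_mul_le _ _
    _ ≤ (∑ j, ‖A i j‖ ^ 2) * ∑ j, ‖v j‖ ^ 2 := Finset.sum_mul_sq_le_sq_mul_sq _ _ _

variable {ι : Type*} [DecidableEq ι]

/-- The off-diagonal entries of `A` in the rows indexed by `S`, all other entries being replaced by
`0`: the part of an operator that moves a basis state to a different one lying in `S`. -/
def offDiagRows (S : Finset ι) (A : Matrix ι ι ℂ) : Matrix ι ι ℂ :=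
  Matrix.of fun i j => if i ∈ S ∧ j ≠ i then A i j else 0

theorem sub_offDiagRows_apply_eq_zero {S : Finset ι} (A : Matrix ι ι ℂ) {i j : ι} (hi : i ∈ S)
    (hij : j ≠ i) : (A - offDiagRows S A) i j = 0 := by
  simp [offDiagRows, hi, hij]

theorem projMat_eq_diagonal (P : Set ι) [DecidablePred (· ∈ P)] :
    projMat P = Matrix.diagonal fun i => if i ∈ P then 1 else 0 := by
  ext i j
  by_cases hij : i = j <;> simp [projMat, hij]

theorem projMat_empty : projMat (∅ : Set ι) = 0 := by
  ext
  simp [projMat]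

variable [Fintype ι]

theorem norm_offDiagRows_sq_le (S : Finset ι) (A : Matrix ι ι ℂ) :
    ‖offDiagRows S A‖ ^ 2 ≤ ∑ i ∈ S, ∑ j with j ≠ i, ‖A i j‖ ^ 2 := by
  have hrow (i : ι) : ∑ j, ‖offDiagRows S A i j‖ ^ 2 =
      if i ∈ S then ∑ j with j ≠ i, ‖A i j‖ ^ 2 else 0 := by
    by_cases hi : i ∈ S <;> simp [offDiagRows, hi, Finset.sum_filter, apply_ite, ite_pow]
  calc ‖offDiagRows S A‖ ^ 2 ≤ ∑ i, ∑ j, ‖offDiagRows S A i j‖ ^ 2 :=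
        l2_opNorm_sq_le_sum_norm_sq _
    _ = ∑ i ∈ S, ∑ j with j ≠ i, ‖A i j‖ ^ 2 := by
        simp only [hrow, Finset.sum_ite_mem, Finset.univ_inter]

theorem toOp_mul (A B : Matrix ι ι ℂ) : toOp (A * B) = (toOp A).comp (toOp B) :=
  map_mul (Matrix.toEuclideanCLM (n := ι) (𝕜 := ℂ)) A B

theorem norm_toOp (A : Matrix ι ι ℂ) : ‖toOp A‖ = ‖A‖ :=
  (Matrix.l2_opNorm_def A).symm

theorem norm_projMat_le_one (P : Set ι) : ‖(projMat P : Matrix ι ι ℂ)‖ ≤ 1 := by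
  classical
  rw [projMat_eq_diagonal, Matrix.l2_opNorm_diagonal, pi_norm_le_iff_of_nonneg zero_le_one]
  intro i
  split_ifs <;> simp

theorem norm_projMat_mul_mul_projMat_le (P Q : Set ι) (A : Matrix ι ι ℂ) :
    ‖projMat Q * A * projMat P‖ ≤ ‖A‖ := by
  calc ‖projMat Q * A * projMat P‖ ≤ 1 * ‖A‖ * 1 :=
        norm_mul_le_of_le (norm_mul_le_of_le (norm_projMat_le_one Q) le_rfl) (norm_projMat_le_one P)
    _ = ‖A‖ := by ring

theorem projMat_mul_mul_projMat_eq_zero {P Q : Set ι} {A : Matrix ι ι ℂ}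
    (hA : ∀ j ∈ P, ∀ i ∈ Q, A i j = 0) : projMat Q * A * projMat P = 0 := by
  classical
  ext i j
  rw [projMat_eq_diagonal, projMat_eq_diagonal, Matrix.mul_diagonal, Matrix.diagonal_mul]
  by_cases hi : i ∈ Q <;> by_cases hj : j ∈ P <;> simp [hi, hj, hA]

end Compression

section SingleRegister

open scoped Matrix.Norms.L2Operator

variable {X Y : Type*} [Fintype X] [DecidableEq X] [DecidableEq Y]

theorem liftMat_sub (x : X) (m n : Matrix (Option Y) (Option Y) ℂ) :
    liftMat x (m - n) = liftMat x m - liftMat x n := by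
  ext
  simp [liftMat, ite_sub_ite]

variable [Fintype Y]

theorem liftMat_mul_apply {κ : Type*} (x : X) (m : Matrix (Option Y) (Option Y) ℂ)
    (N : Matrix (X → Option Y) κ ℂ) (D' : X → Option Y) (j : κ) :
    (liftMat x m * N) D' j = ∑ w, m (D' x) w * N (Function.update D' x w) j := by
  rw [Matrix.mul_apply]
  symm
  refine Fintype.sum_of_injective _ (Function.update_injective D' x) _ _ (fun E hE => ?_)
    fun w => ?_
  · have hoff : ¬ ∀ a, a ≠ x → D' a = E a := fun h =>
      hE ⟨E x, Function.update_eq_iff.2 ⟨rfl, h⟩⟩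
    simp [liftMat, hoff]
  · have hoff : ∀ a, a ≠ x → D' a = Function.update D' x w a := fun a ha =>
      (Function.update_of_ne ha w D').symm
    rw [liftMat, Matrix.of_apply, if_pos hoff, Function.update_self]

theorem liftMat_mul (x : X) (m n : Matrix (Option Y) (Option Y) ℂ) :
    liftMat x (m * n) = liftMat x m * liftMat x n := by
  ext D' D
  have hoff (w : Option Y) : (∀ a, a ≠ x → Function.update D' x w a = D a) ↔
      ∀ a, a ≠ x → D' a = D a :=
    forall₂_congr fun a ha => by rw [Function.update_of_ne ha]
  rw [liftMat_mul_apply]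
  simp [liftMat, hoff, Matrix.mul_apply]

/-- `liftMat x` as a homomorphism of star algebras; this is what makes it contractive. -/
def liftMatHom (x : X) :
    Matrix (Option Y) (Option Y) ℂ →⋆ₙₐ[ℂ] Matrix (X → Option Y) (X → Option Y) ℂ where
  toFun := liftMat x
  map_smul' c m := by ext; simp [liftMat]
  map_zero' := by ext; simp [liftMat]
  map_add' m n := by ext; simp [liftMat, ite_add_ite]
  map_mul' := liftMat_mul x
  map_star' m := by
    ext D' D
    simp [liftMat, Matrix.star_apply, apply_ite (star : ℂ → ℂ), eq_comm (a := D' _)]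

theorem norm_liftMat_le (x : X) (m : Matrix (Option Y) (Option Y) ℂ) : ‖liftMat x m‖ ≤ ‖m‖ :=
  NonUnitalStarAlgHom.norm_apply_le (liftMatHom x) m

theorem update_mem_agreeOff_tail_iff {X Y : Type*} [DecidableEq X] {k : ℕ} {x : Fin (k + 1) → X}
    (hx : ∀ i : Fin k, x i.succ ≠ x 0) (D' D : X → Option Y) (w : Option Y) :
    Function.update D' (x 0) w ∈ agreeOff D (fun i => x i.succ) ↔
      w = D (x 0) ∧ D' ∈ agreeOff D x := by
  constructor
  · intro h
    refine ⟨by simpa using h (x 0) hx, fun a ha => ?_⟩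
    simpa [Function.update_of_ne (ha 0).symm] using h a fun i => ha i.succ
  · rintro ⟨rfl, h⟩ a ha
    rcases eq_or_ne a (x 0) with rfl | ha₀
    · exact Function.update_self ..
    · rw [Function.update_of_ne ha₀]
      exact h a (Fin.cases ha₀.symm ha)

open Classical in
theorem prod_ofFn_liftMat_apply {k : ℕ} {x : Fin k → X} (hx : Function.Injective x)
    (m : Fin k → Matrix (Option Y) (Option Y) ℂ) (D' D : X → Option Y) :
    (List.ofFn fun i => liftMat (x i) (m i)).prod D' D =
      if D' ∈ agreeOff D x then ∏ i, m i (D' (x i)) (D (x i)) else 0 := by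
  induction k generalizing D' with
  | zero => simp [agreeOff, Matrix.one_apply, funext_iff]
  | succ k ih =>
    have hx₀ (i : Fin k) : x i.succ ≠ x 0 := hx.ne (Fin.succ_ne_zero i)
    have htail := ih (x := fun i => x i.succ) (hx.comp (Fin.succ_injective k)) fun i => m i.succ
    simp only [List.ofFn_succ, List.prod_cons, liftMat_mul_apply, htail,
      update_mem_agreeOff_tail_iff hx₀, Function.update_of_ne (hx₀ _)]
    rw [Fintype.sum_eq_single (D (x 0)) fun w hw => by simp [hw]]
    simp [Fin.prod_univ_succ]

theorem projMat_mul_prod_liftMat_mul_projMat_eq_zero {k : ℕ} {x : Fin k → X}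
    (hx : Function.Injective x) {m : Fin k → Matrix (Option Y) (Option Y) ℂ}
    {P P' : Set (X → Option Y)}
    (hm : ∀ D ∈ P, ∀ D' ∈ P', D' ∈ agreeOff D x → ∃ i, m i (D' (x i)) (D (x i)) = 0) :
    projMat P' * (List.ofFn fun i => liftMat (x i) (m i)).prod * projMat P = 0 := by
  classical
  refine projMat_mul_mul_projMat_eq_zero fun D hD D' hD' => ?_
  rw [prod_ofFn_liftMat_apply hx, ite_eq_right_iff]
  intro hoff
  obtain ⟨i, hi⟩ := hm D hD D' hD' hoff
  exact Finset.prod_eq_zero (Finset.mem_univ i) hi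

theorem norm_projMat_mul_prod_liftMat_mul_projMat_le {k : ℕ} {x : Fin k → X}
    (hx : Function.Injective x) {A B : Fin k → Matrix (Option Y) (Option Y) ℂ} {β : ℝ}
    (hβ : 0 ≤ β) (hA : ∀ i, ‖A i‖ ≤ 1) (hAB : ∀ i, ‖A i - B i‖ ≤ β)
    {P P' : Set (X → Option Y)}
    (hB : ∀ D ∈ P, ∀ D' ∈ P', D' ∈ agreeOff D x → ∃ i, B i (D' (x i)) (D (x i)) = 0) :
    ‖projMat P' * (List.ofFn fun i => liftMat (x i) (A i)).prod * projMat P‖ ≤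
      Real.exp 1 * k * β := by
  set F := (List.ofFn fun i => liftMat (x i) (A i)).prod
  set G := (List.ofFn fun i => liftMat (x i) (B i)).prod
  have hFi (i : Fin k) : ‖liftMat (x i) (A i)‖ ≤ 1 := (norm_liftMat_le _ _).trans (hA i)
  rcases le_total (k * β) 1 with hkβ | hkβ
  · have hG : projMat P' * G * projMat P = 0 :=
      projMat_mul_prod_liftMat_mul_projMat_eq_zero hx hB
    have hFG : ‖F - G‖ ≤ k * β * (1 + β) ^ k := by
      refine norm_prod_ofFn_sub_prod_ofFn_le hFi fun i => ?_
      rw [← liftMat_sub]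
      exact (norm_liftMat_le _ _).trans (hAB i)
    have hpow : (1 + β) ^ k ≤ Real.exp 1 := by
      calc (1 + β) ^ k ≤ Real.exp β ^ k := by
            gcongr
            linarith [Real.add_one_le_exp β]
        _ = Real.exp (k * β) := (Real.exp_nat_mul β k).symm
        _ ≤ Real.exp 1 := by gcongr
    calc ‖projMat P' * F * projMat P‖ = ‖projMat P' * (F - G) * projMat P‖ := by
          rw [mul_sub, sub_mul, hG, sub_zero]
      _ ≤ k * β * (1 + β) ^ k := (norm_projMat_mul_mul_projMat_le _ _ _).trans hFG
      _ ≤ k * β * Real.exp 1 := by gcongr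
      _ = Real.exp 1 * k * β := by ring
  · calc ‖projMat P' * F * projMat P‖ ≤ ‖F‖ := norm_projMat_mul_mul_projMat_le _ _ _
      _ ≤ 1 ^ k := norm_prod_ofFn_le_pow hFi
      _ = 1 * 1 := by simp
      _ ≤ Real.exp 1 * (k * β) := by
          gcongr
          exact Real.one_le_exp zero_le_one
      _ = Real.exp 1 * k * β := (mul_assoc _ _ _).symm

end SingleRegister

section CompressedOracle

open scoped Matrix.Norms.L2Operator

variable {Y : Type*} [Fintype Y] [DecidableEq Y]

theorem inv_ofReal_sqrt_natCast_mul_self (n : ℕ) :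
    ((Real.sqrt n : ℝ) : ℂ)⁻¹ * ((Real.sqrt n : ℝ) : ℂ)⁻¹ = (n : ℂ)⁻¹ := by
  rw [← mul_inv, ← Complex.ofReal_mul, Real.mul_self_sqrt n.cast_nonneg, Complex.ofReal_natCast]

theorem compMat_isHermitian : (compMat Y).IsHermitian := by
  ext u v
  rcases u with _ | u <;> rcases v with _ | v <;>
    simp [compMat, Matrix.conjTranspose_apply, eq_comm]

theorem compMat_mul_self [Nonempty Y] : compMat Y * compMat Y = 1 := by
  have hM : (Fintype.card Y : ℂ) ≠ 0 := Nat.cast_ne_zero.2 Fintype.card_ne_zero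
  have hs := inv_ofReal_sqrt_natCast_mul_self (Fintype.card Y)
  ext u v
  rw [Matrix.mul_apply, Fintype.sum_option]
  rcases u with _ | u <;> rcases v with _ | v
  · simp [compMat, hs, hM]
  · simp [compMat, ← Finset.mul_sum, hM]
  · simp [compMat, ← Finset.sum_mul, hM]
  · simp [compMat, hs, sub_mul, mul_sub, Finset.sum_sub_distrib, Matrix.one_apply, hM]

theorem norm_compMat_le_one [Nonempty Y] : ‖compMat Y‖ ≤ 1 := by
  refine (CStarRing.norm_of_mem_unitary ?_).le
  rw [Unitary.mem_iff, Matrix.star_eq_conjTranspose, compMat_isHermitian.eq]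
  exact ⟨compMat_mul_self, compMat_mul_self⟩

variable [AddCommGroup Y]

theorem norm_oMat_le_one (c : AddChar Y ℂ) : ‖oMat c‖ ≤ 1 := by
  rw [oMat, Matrix.l2_opNorm_diagonal, pi_norm_le_iff_of_nonneg zero_le_one]
  rintro (_ | _) <;> simp

theorem norm_cOMat_le_one (c : AddChar Y ℂ) : ‖cOMat c‖ ≤ 1 := by
  calc ‖cOMat c‖ ≤ 1 * 1 * 1 := norm_mul_le_of_le
        (norm_mul_le_of_le norm_compMat_le_one (norm_oMat_le_one c)) norm_compMat_le_one
    _ = 1 := by norm_num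

theorem cOMat_zero : cOMat (0 : AddChar Y ℂ) = 1 := by
  have hO : oMat (0 : AddChar Y ℂ) = 1 := by
    rw [oMat, ← Matrix.diagonal_one]
    congr 1
    ext (_ | _) <;> simp
  rw [cOMat, hO, mul_one, compMat_mul_self]

theorem cOMat_some_none {c : AddChar Y ℂ} (hc : c ≠ 0) (u : Y) :
    cOMat c (some u) none = c u / (Real.sqrt (Fintype.card Y) : ℝ) := by
  have hsum : ∑ y, c y = 0 := AddChar.sum_eq_zero_iff_ne_zero.2 hc
  rw [cOMat, Matrix.mul_apply, Fintype.sum_option]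
  simp only [oMat, Matrix.mul_diagonal]
  simp [compMat, ← Finset.sum_mul, sub_mul, ← Finset.mul_sum, hsum, div_eq_mul_inv]

theorem cOMat_some_some {c : AddChar Y ℂ} (hc : c ≠ 0) {u r : Y} (h : u ≠ r) :
    cOMat c (some u) (some r) = (1 - c u - c r) / Fintype.card Y := by
  have hsum : ∑ y, c y = 0 := AddChar.sum_eq_zero_iff_ne_zero.2 hc
  have hs := inv_ofReal_sqrt_natCast_mul_self (Fintype.card Y)
  rw [cOMat, Matrix.mul_apply, Fintype.sum_option]
  simp only [oMat, Matrix.mul_diagonal]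
  simp [compMat, hs, sub_mul, mul_sub, ← Finset.mul_sum, ← Finset.sum_mul, hsum, h]
  ring

theorem norm_cOMat_some_none_sq_le (c : AddChar Y ℂ) (u : Y) :
    ‖cOMat c (some u) none‖ ^ 2 ≤ 1 / Fintype.card Y := by
  rcases eq_or_ne c 0 with rfl | hc
  · simp [cOMat_zero]
  · rw [cOMat_some_none hc, norm_div, AddChar.norm_apply, Complex.norm_real,
      Real.norm_of_nonneg (Real.sqrt_nonneg _), div_pow, one_pow, Real.sq_sqrt (Nat.cast_nonneg _)]

theorem norm_cOMat_some_some_sq_le (c : AddChar Y ℂ) {u r : Y} (h : u ≠ r) :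
    ‖cOMat c (some u) (some r)‖ ^ 2 ≤ 9 / (Fintype.card Y : ℝ) ^ 2 := by
  rcases eq_or_ne c 0 with rfl | hc
  · have hzero : cOMat (0 : AddChar Y ℂ) (some u) (some r) = 0 := by simp [cOMat_zero, h]
    rw [hzero, norm_zero, zero_pow two_ne_zero]
    positivity
  · have hnum : ‖1 - c u - c r‖ ≤ 3 := by
      calc ‖1 - c u - c r‖ ≤ ‖(1 : ℂ)‖ + ‖c u‖ + ‖c r‖ :=
            norm_sub_le_of_le (norm_sub_le _ _) le_rfl
        _ = 3 := by simp only [norm_one, AddChar.norm_apply]; norm_num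
    rw [cOMat_some_some hc h, norm_div, div_pow, Complex.norm_natCast]
    calc ‖1 - c u - c r‖ ^ 2 / (Fintype.card Y : ℝ) ^ 2 ≤ 3 ^ 2 / (Fintype.card Y : ℝ) ^ 2 := by
          gcongr
      _ = 9 / (Fintype.card Y : ℝ) ^ 2 := by norm_num

theorem sum_norm_cOMat_some_sq_le (c : AddChar Y ℂ) (u : Y) :
    ∑ r with r ≠ some u, ‖cOMat c (some u) r‖ ^ 2 ≤ 10 / Fintype.card Y := by
  have hM : (Fintype.card Y : ℝ) ≠ 0 := Nat.cast_ne_zero.2 Fintype.card_ne_zero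
  have hsome (r : Y) : (if some r ≠ some u then ‖cOMat c (some u) (some r)‖ ^ 2 else 0) ≤
      9 / (Fintype.card Y : ℝ) ^ 2 := by
    split_ifs with hr
    · exact norm_cOMat_some_some_sq_le c fun h => hr (congrArg some h.symm)
    · positivity
  rw [Finset.sum_filter, Fintype.sum_option, if_pos (Option.some_ne_none u).symm]
  calc _ ≤ 1 / (Fintype.card Y : ℝ) + ∑ _r : Y, 9 / (Fintype.card Y : ℝ) ^ 2 :=
        add_le_add (norm_cOMat_some_none_sq_le c u) (Finset.sum_le_sum fun r _ => hsome r)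
    _ = 10 / Fintype.card Y := by
        rw [Finset.sum_const, Finset.card_univ, nsmul_eq_mul]
        field_simp
        norm_num

theorem norm_offDiagRows_cOMat_le (L : Finset Y) (c : AddChar Y ℂ) :
    ‖offDiagRows (L.map Function.Embedding.some) (cOMat c)‖ ≤
      Real.sqrt (10 * L.card / Fintype.card Y) := by
  refine Real.le_sqrt_of_sq_le ((norm_offDiagRows_sq_le _ _).trans ?_)
  calc ∑ v ∈ L.map Function.Embedding.some, ∑ r with r ≠ v, ‖cOMat c v r‖ ^ 2
      = ∑ u ∈ L, ∑ r with r ≠ some u, ‖cOMat c (some u) r‖ ^ 2 := Finset.sum_map _ _ _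
    _ ≤ ∑ _u ∈ L, 10 / (Fintype.card Y : ℝ) :=
        Finset.sum_le_sum fun u _ => sum_norm_cOMat_some_sq_le c u
    _ = 10 * L.card / Fintype.card Y := by rw [Finset.sum_const, nsmul_eq_mul]; ring

end CompressedOracle

section Recognizability

variable {X Y : Type*} {k : ℕ}

/-- The finite set `L` recognizes the transition from `P` to `P'` by queries at `x`: no database in
`P` can be turned into one in `P'` by changing its values at `x` unless one of these registers
receives a new value in `L`.  This is the paper's recognizability by local properties, with one set
of values `L` shared by all the queried registers. -/
def RecognizesTransition (L : Finset Y) (x : Fin k → X) (P P' : Set (X → Option Y)) : Prop :=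
  ∀ D ∈ P, ∀ D' ∈ P', D' ∈ agreeOff D x →
    ∃ i, D (x i) ≠ D' (x i) ∧ D' (x i) ∈ L.map Function.Embedding.some

theorem agreeOff_eq_of_mem {x : Fin k → X} {D D₀ : X → Option Y} (hD : D ∈ agreeOff D₀ x) :
    agreeOff D x = agreeOff D₀ x :=
  Set.ext fun _ => forall₂_congr fun a ha => by rw [hD a ha]

variable [Fintype X] [DecidableEq X] [Fintype Y] [DecidableEq Y] [AddCommGroup Y]

open scoped Matrix.Norms.L2Operator in
theorem norm_transition_le_of_recognizes {x : Fin k → X} (hx : Function.Injective x)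
    (c : Fin k → AddChar Y ℂ) {P P' : Set (X → Option Y)} {L : Finset Y}
    (hL : RecognizesTransition L x P P') :
    ‖projMat P' * cOparMat x c * projMat P‖ ≤
      Real.exp 1 * k * Real.sqrt (10 * L.card / Fintype.card Y) := by
  let S := L.map Function.Embedding.some
  refine norm_projMat_mul_prod_liftMat_mul_projMat_le hx
    (B := fun i => cOMat (c i) - offDiagRows S (cOMat (c i))) (Real.sqrt_nonneg _)
    (fun i => norm_cOMat_le_one (c i)) (fun i => ?_) fun D hD D' hD' hoff => ?_
  · rw [sub_sub_cancel]
    exact norm_offDiagRows_cOMat_le L (c i)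
  · obtain ⟨i, hne, hmem⟩ := hL D hD D' hD' hoff
    exact ⟨i, sub_offDiagRows_apply_eq_zero _ hmem hne⟩

open scoped Matrix.Norms.L2Operator in
theorem qtc_le_of_recognizes {P P' : Set (X → Option Y)} {X₀ : Set X} {n : ℕ}
    (h : ∀ x : Fin k → X, ∀ D₀ ∈ P, ∃ L : Finset Y, L.card ≤ n ∧
      RecognizesTransition L x (P ∩ agreeOff D₀ x) (P' ∩ agreeOff D₀ x)) :
    qtc P P' k X₀ ≤ Real.exp 1 * k * Real.sqrt (10 * n / Fintype.card Y) := by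
  refine Real.sSup_le ?_ (by positivity)
  rintro _ ⟨x, c, D, hx, -, rfl⟩
  rw [← toOp_mul, ← toOp_mul, norm_toOp, ← mul_assoc]
  rcases (P ∩ agreeOff D x).eq_empty_or_nonempty with hempty | ⟨D₀, hD₀, hoff⟩
  · rw [hempty, projMat_empty, mul_zero, norm_zero]
    positivity
  · obtain ⟨L, hLn, hL⟩ := h x D₀ hD₀
    rw [agreeOff_eq_of_mem hoff] at hL
    refine (norm_transition_le_of_recognizes hx c hL).trans ?_
    gcongr

end Recognizability

section Chains

variable {X Y : Type*} {rel : Y → X → Prop}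

theorem exists_new_link_of_mem_CHN {q : ℕ} {D D' : X → Option Y} (hD : D ∉ CHN rel q)
    (hD' : D' ∈ CHN rel (q + 1)) :
    ∃ a b y, D a ≠ D' a ∧ D' a = some y ∧ rel y b ∧ D' b ≠ none := by
  obtain ⟨xs, hxs⟩ := hD'
  obtain ⟨i, hi⟩ : ∃ i : Fin q, D (xs i.castSucc.castSucc) ≠ D' (xs i.castSucc.castSucc) := by
    by_contra! hsame
    refine hD ⟨fun i => xs i.castSucc, fun i => ?_⟩
    rw [hsame]
    exact hxs i.castSucc
  obtain ⟨y, hy, hrel⟩ := hxs i.castSucc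
  obtain ⟨z, hz, -⟩ := hxs i.succ
  refine ⟨_, _, y, hi, hy, hrel, ?_⟩
  rw [Fin.succ_castSucc, hz]
  exact Option.some_ne_none z

variable [Fintype X] [Fintype Y] {k : ℕ}

open Classical in
/-- The values related to a queried point or to a point of the support of `D`: those that may
prolong a chain when written into a database that agrees with `D` off the queried points. -/
noncomputable def linkValues (rel : Y → X → Prop) (x : Fin k → X) (D : X → Option Y) : Finset Y :=
  (Finset.univ.image x ∪ ({b | D b ≠ none} : Finset X)).biUnion fun b => {y | rel y b}

theorem card_linkValues_le {T s : ℕ} (hT : ∀ b, {y | rel y b}.ncard ≤ T) (x : Fin k → X)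
    {D : X → Option Y} (hD : D ∈ SIZE s) : (linkValues rel x D).card ≤ (k + s) * T := by
  classical
  have hrange : (Finset.univ.image x).card ≤ k := Finset.card_image_le.trans_eq (Finset.card_fin k)
  have hsupp : (Finset.univ.filter fun b => D b ≠ none).card ≤ s := by
    rw [← Set.ncard_coe_finset, Finset.coe_filter_univ]
    exact hD.2
  calc (linkValues rel x D).card ≤ _ * T := by
        refine Finset.card_biUnion_le_card_mul _ _ _ fun b _ => ?_
        rw [← Set.ncard_coe_finset, Finset.coe_filter_univ]
        exact hT b
    _ ≤ (k + s) * T := by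
        gcongr
        exact (Finset.card_union_le _ _).trans (add_le_add hrange hsupp)

theorem recognizesTransition_linkValues (x : Fin k → X) (P : Set (X → Option Y)) (q : ℕ)
    (D₀ : X → Option Y) :
    RecognizesTransition (linkValues rel x D₀) x ((P \ CHN rel q) ∩ agreeOff D₀ x)
      (CHN rel (q + 1) ∩ agreeOff D₀ x) := by
  rintro D ⟨⟨-, hD⟩, -⟩ D' ⟨hD', hoff₀⟩ hoff
  obtain ⟨a, b, y, hne, hy, hrel, hb⟩ := exists_new_link_of_mem_CHN hD hD'
  obtain ⟨i, rfl⟩ : ∃ i, x i = a := by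
    by_contra! ha
    exact hne (hoff a ha).symm
  have hb' : (∃ j, x j = b) ∨ D₀ b ≠ none := by
    by_contra! hcon
    exact hb ((hoff₀ b hcon.1).trans hcon.2)
  refine ⟨i, hne, ?_⟩
  rw [hy]
  simpa [linkValues] using ⟨b, hb', hrel⟩

end Chains

theorem stmt_14_general {X Y : Type*} [Fintype X] [DecidableEq X] [Fintype Y] [DecidableEq Y]
    [AddCommGroup Y] (rel : Y → X → Prop) (T : ℕ) (hT : ∀ a : X, {y : Y | rel y a}.ncard ≤ T)
    (k q s : ℕ) (X₀ : Set X) :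
    qtc (SIZE s \ CHN rel q) (CHN rel (q + 1)) k X₀
      ≤ Real.exp 1 * k * Real.sqrt (10 * (k + s) * T / Fintype.card Y) := by
  have h := qtc_le_of_recognizes (k := k) (X₀ := X₀) (n := (k + s) * T)
    fun x D₀ (hD₀ : D₀ ∈ SIZE s \ CHN rel q) =>
      ⟨linkValues rel x D₀, card_linkValues_le hT x hD₀.1, recognizesTransition_linkValues x _ q D₀⟩
  simpa only [Nat.cast_mul, Nat.cast_add, mul_assoc] using h

theorem stmt_14 {X Y : Type*} [Fintype X] [DecidableEq X] [Nonempty X]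
    [Fintype Y] [DecidableEq Y] [AddCommGroup Y]
    (rel : Y → X → Prop) (T : ℕ) (hT : ∀ a : X, {y : Y | rel y a}.ncard ≤ T)
    (k q : ℕ) (hk : 1 ≤ k) (hq : 1 ≤ q) :
    qtc (SIZE (k * (q - 1)) \ CHN rel q) (CHN rel (q + 1)) k Set.univ
      ≤ Real.exp 1 * k * Real.sqrt (10 * k * q * T / Fintype.card Y) := by
  have hsize : (k : ℝ) + (k * (q - 1) : ℕ) = k * q := by
    rw [Nat.cast_mul, Nat.cast_sub hq, Nat.cast_one]; ring
  simpa only [hsize, ← mul_assoc] using stmt_14_general rel T hT k q (k * (q - 1)) Set.univ
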